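/- Under Assumption 3, the two joint rate functions satisfy the fluctuation relation J_P(m,w) = J_Q(m,w) + w for every pair (m,w) in their common domain of finiteness (Proposition 1). -/

import Mathlib

open MeasureTheory Filter Set Topology
open scoped ENNReal NNReal

/-- A sequence of measures satisfies the large deviation principle with rate function `I`:
upper bound over closed sets and lower bound over open sets, at exponential speed `n`. -/
def SatisfiesLDP {X : Type*} [TopologicalSpace X] [MeasurableSpace X]
    (mu : ℕ → Measure X) (I : X → ℝ≥0∞) : Prop :=
  (∀ F : Set X, IsClosed F →
      limsup (fun n : ℕ => (((n : ℝ)⁻¹ : ℝ) : EReal) * ENNReal.log (mu n F)) atTop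
        ≤ -(⨅ x ∈ F, (I x : EReal))) ∧
  (∀ G : Set X, IsOpen G →
      -(⨅ x ∈ G, (I x : EReal)) ≤
        liminf (fun n : ℕ => (((n : ℝ)⁻¹ : ℝ) : EReal) * ENNReal.log (mu n G)) atTop)

/-- A good rate function: lower semicontinuous with compact sublevel sets. -/
def IsGoodRate {X : Type*} [TopologicalSpace X] (I : X → ℝ≥0∞) : Prop :=
  LowerSemicontinuous I ∧ ∀ c : ℝ≥0∞, c ≠ ⊤ → IsCompact {x | I x ≤ c}

/-- The subdifferential of an extended-real-valued function on ℝ at a point. -/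
def Subdiff (f : ℝ → EReal) (x : ℝ) : Set ℝ :=
  {k | ∀ y : ℝ, f x + ((k * (y - x) : ℝ) : EReal) ≤ f y}

/-- `(1/n) log x` as an extended real number. -/
noncomputable def expRate (n : ℕ) (x : ℝ≥0∞) : EReal :=
  (((n : ℝ)⁻¹ : ℝ) : EReal) * ENNReal.log x

/-- The action `W_n = -(1/n) log (dP/dQ)`. -/
noncomputable def action {Λ : Type*} [MeasurableSpace Λ]
    (P Q : Measure Λ) (n : ℕ) (x : Λ) : ℝ :=
  -(n : ℝ)⁻¹ * Real.log ((P.rnDeriv Q) x).toReal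

/-!
On the event that the action lies near `w`, the density `dP/dQ = exp (-n W)` is within a factor
`exp (n ε)` of `exp (-n w)`. So on every small neighbourhood of `(m, w)` the laws of `(M, W)` under
`P` and `Q` differ by a factor `exp (-n w)`, up to an arbitrarily small exponential error. A lower
semicontinuous rate function is determined by the exponential decay of the mass of shrinking closed
neighbourhoods, so the two rate functions differ by `w`.
-/

lemma expRate_mono (n : ℕ) : Monotone (expRate n) := fun _ _ hxy =>
  mul_le_mul_of_nonneg_left (ENNReal.log_monotone hxy) (by positivity)

lemma expRate_exp_mul {n : ℕ} (hn : n ≠ 0) (b : ℝ) (x : ℝ≥0∞) :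
    expRate n (ENNReal.ofReal (Real.exp (n * b)) * x) = b + expRate n x := by
  have hn' : (n : ℝ) ≠ 0 := Nat.cast_ne_zero.2 hn
  rw [expRate, ENNReal.log_mul_add, ENNReal.log_ofReal_of_pos (Real.exp_pos _), Real.log_exp,
    EReal.left_distrib_of_nonneg_of_ne_top (by positivity) (EReal.coe_ne_top _),
    ← EReal.coe_mul, inv_mul_cancel_left₀ hn', expRate]

namespace SatisfiesLDP

variable {X : Type*} [TopologicalSpace X] [MeasurableSpace X] {μ ν : ℕ → Measure X}
  {I K : X → ℝ≥0∞} {p : X}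

lemma neg_le_liminf_expRate (hμ : SatisfiesLDP μ I) {U : Set X} (hU : U ∈ 𝓝 p) :
    -(I p : EReal) ≤ liminf (fun n => expRate n (μ n U)) atTop :=
  calc -(I p : EReal)
    _ ≤ -(⨅ x ∈ interior U, (I x : EReal)) :=
      EReal.neg_le_neg_iff.2 (iInf₂_le p (mem_interior_iff_mem_nhds.2 hU))
    _ ≤ liminf (fun n => expRate n (μ n (interior U))) atTop := hμ.2 _ isOpen_interior
    _ ≤ liminf (fun n => expRate n (μ n U)) atTop :=
      liminf_le_liminf (.of_forall fun n => expRate_mono n (measure_mono interior_subset))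

lemma limsup_expRate_le_neg (hμ : SatisfiesLDP μ I) {F : Set X} (hF : IsClosed F) {c : EReal}
    (hc : ∀ x ∈ F, c ≤ I x) : limsup (fun n => expRate n (μ n F)) atTop ≤ -c :=
  (hμ.1 F hF).trans (EReal.neg_le_neg_iff.2 (le_iInf₂ hc))

lemma le_add_of_expRate_le_on (hμ : SatisfiesLDP μ I) (hν : SatisfiesLDP ν K) {F : Set X}
    (hFp : F ∈ 𝓝 p) (hF : IsClosed F) {b : ℝ} {c : EReal} (hc : ∀ x ∈ F, c ≤ K x)
    (hle : ∀ᶠ n in atTop, expRate n (μ n F) ≤ b + expRate n (ν n F)) :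
    c ≤ I p + b := by
  have key : -(I p : EReal) ≤ b + -c :=
    calc -(I p : EReal)
      _ ≤ liminf (fun n => expRate n (μ n F)) atTop := hμ.neg_le_liminf_expRate hFp
      _ ≤ liminf ((fun _ => (b : EReal)) + fun n => expRate n (ν n F)) atTop :=
        liminf_le_liminf hle
      _ ≤ limsup (fun _ : ℕ => (b : EReal)) atTop + liminf (fun n => expRate n (ν n F)) atTop :=
        EReal.liminf_add_le (by simp) (by simp)
      _ ≤ b + limsup (fun n => expRate n (ν n F)) atTop := by
        rw [limsup_const]
        gcongr
        exact liminf_le_limsup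
      _ ≤ b + -c := by
        gcongr
        exact hν.limsup_expRate_le_neg hF hc
  rw [← EReal.sub_le_iff_le_add (by simp) (by simp), ← EReal.neg_le_neg_iff,
    EReal.neg_sub (by simp) (by simp), add_comm]
  exact key

theorem le_add_of_eventually_smallSets [RegularSpace X] (hμ : SatisfiesLDP μ I)
    (hν : SatisfiesLDP ν K) (hK : LowerSemicontinuousAt K p) {a : ℝ}
    (hle : ∀ b > a, ∀ᶠ F in (𝓝 p).smallSets, IsClosed F →
      ∀ᶠ n in atTop, expRate n (μ n F) ≤ b + expRate n (ν n F)) :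
    (K p : EReal) ≤ I p + a := by
  have hK' : LowerSemicontinuousAt (fun x => (K x : EReal)) p :=
    continuous_coe_ennreal_ereal.continuousAt.comp_lowerSemicontinuousAt hK
      EReal.coe_ennreal_strictMono.monotone
  have le_add_of_gt : ∀ b : ℝ, a < b → (K p : EReal) ≤ I p + b := by
    intro b hab
    refine le_of_forall_lt_imp_le_of_dense fun c hc => ?_
    obtain ⟨U, hU, hUle⟩ := eventually_smallSets.1 (hle b hab)
    obtain ⟨F, hFp, hF, hFU⟩ := exists_mem_nhds_isClosed_subset (inter_mem hU (hK' c hc))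
    exact hμ.le_add_of_expRate_le_on hν hFp hF (fun x hx => (hFU hx).2.le)
      (hUle F (hFU.trans inter_subset_left) hF)
  rw [add_comm, ← EReal.sub_le_iff_le_add (by simp) (by simp), ← EReal.le_of_forall_lt_iff_le]
  intro b hab
  rw [EReal.sub_le_iff_le_add (by simp) (by simp), add_comm]
  exact le_add_of_gt b (EReal.coe_lt_coe_iff.1 hab)

end SatisfiesLDP

section ChangeOfMeasure

variable {Λ : Type*} [MeasurableSpace Λ] {P Q : Measure Λ}

lemma measurable_action (P Q : Measure Λ) (n : ℕ) : Measurable (action P Q n) :=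
  (Measure.measurable_rnDeriv P Q).ennreal_toReal.log.const_mul _

variable [SigmaFinite P] [SigmaFinite Q] {n : ℕ} {S : Set Λ} {w : ℝ}

lemma rnDeriv_ae_eq_exp_neg_mul_action (hPQ : P ≪ Q) (hQP : Q ≪ P) (hn : n ≠ 0) :
    P.rnDeriv Q =ᵐ[Q] fun x => ENNReal.ofReal (Real.exp (-(n * action P Q n x))) := by
  filter_upwards [hQP.ae_le (Measure.rnDeriv_pos hPQ), Measure.rnDeriv_lt_top P Q]
    with x hpos hlt_top
  have hlog : -(n * action P Q n x) = Real.log (P.rnDeriv Q x).toReal := by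
    rw [action]
    field_simp
  rw [hlog, Real.exp_log (ENNReal.toReal_pos hpos.ne' hlt_top.ne),
    ENNReal.ofReal_toReal hlt_top.ne]

lemma measure_le_exp_mul_of_le_action (hPQ : P ≪ Q) (hQP : Q ≪ P) (hn : n ≠ 0)
    (hS : MeasurableSet S) (hw : ∀ x ∈ S, w ≤ action P Q n x) :
    P S ≤ ENNReal.ofReal (Real.exp (n * -w)) * Q S := by
  rw [← Measure.setLIntegral_rnDeriv hPQ, ← setLIntegral_const]
  refine setLIntegral_mono_ae' hS ?_
  filter_upwards [rnDeriv_ae_eq_exp_neg_mul_action hPQ hQP hn] with x hx hxS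
  rw [hx, mul_neg]
  gcongr
  exact hw x hxS

lemma measure_le_exp_mul_of_action_le (hPQ : P ≪ Q) (hQP : Q ≪ P) (hn : n ≠ 0)
    (hS : MeasurableSet S) (hw : ∀ x ∈ S, action P Q n x ≤ w) :
    Q S ≤ ENNReal.ofReal (Real.exp (n * w)) * P S := by
  rw [← Measure.setLIntegral_rnDeriv hPQ,
    ← lintegral_const_mul _ (Measure.measurable_rnDeriv P Q), ← setLIntegral_one]
  refine setLIntegral_mono_ae' hS ?_
  filter_upwards [rnDeriv_ae_eq_exp_neg_mul_action hPQ hQP hn] with x hx hxS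
  rw [hx, ← ENNReal.ofReal_mul (Real.exp_pos _).le, ← Real.exp_add, ENNReal.one_le_ofReal,
    Real.one_le_exp_iff, ← sub_eq_add_neg, sub_nonneg]
  gcongr
  exact hw x hxS

end ChangeOfMeasure

section JointLaw

variable {E : Type*} [TopologicalSpace E] [MeasurableSpace E] [OpensMeasurableSpace (E × ℝ)]
  {Λ : Type*} [MeasurableSpace Λ] {P Q : Measure Λ} [SigmaFinite P] [SigmaFinite Q]
  {M : Λ → E} {n : ℕ} {F : Set (E × ℝ)} {w : ℝ}

lemma expRate_map_le_neg_add_of_le_snd (hPQ : P ≪ Q) (hQP : Q ≪ P) (hM : Measurable M)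
    (hn : n ≠ 0) (hF : IsClosed F) (hw : ∀ y ∈ F, w ≤ y.2) :
    expRate n (P.map (fun x => (M x, action P Q n x)) F) ≤
      ((-w : ℝ) : EReal) + expRate n (Q.map (fun x => (M x, action P Q n x)) F) := by
  have hMW := hM.prodMk (measurable_action P Q n)
  rw [Measure.map_apply hMW hF.measurableSet, Measure.map_apply hMW hF.measurableSet,
    ← expRate_exp_mul hn]
  exact expRate_mono n (measure_le_exp_mul_of_le_action hPQ hQP hn (hMW hF.measurableSet)
    fun x hx => hw _ hx)

lemma expRate_map_le_add_of_snd_le (hPQ : P ≪ Q) (hQP : Q ≪ P) (hM : Measurable M)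
    (hn : n ≠ 0) (hF : IsClosed F) (hw : ∀ y ∈ F, y.2 ≤ w) :
    expRate n (Q.map (fun x => (M x, action P Q n x)) F) ≤
      w + expRate n (P.map (fun x => (M x, action P Q n x)) F) := by
  have hMW := hM.prodMk (measurable_action P Q n)
  rw [Measure.map_apply hMW hF.measurableSet, Measure.map_apply hMW hF.measurableSet,
    ← expRate_exp_mul hn]
  exact expRate_mono n (measure_le_exp_mul_of_action_le hPQ hQP hn (hMW hF.measurableSet)
    fun x hx => hw _ hx)

end JointLaw

theorem fluctuation_relation_general
    {E : Type*} [TopologicalSpace E] [RegularSpace E] [MeasurableSpace E]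
    [OpensMeasurableSpace (E × ℝ)] {Λ : ℕ → Type*} [∀ n, MeasurableSpace (Λ n)]
    (P Q : ∀ n, Measure (Λ n)) [∀ n, SigmaFinite (P n)] [∀ n, SigmaFinite (Q n)]
    (habs : ∀ n, P n ≪ Q n ∧ Q n ≪ P n) (M : ∀ n, Λ n → E) (hM : ∀ n, Measurable (M n))
    (J_P J_Q : E × ℝ → ℝ≥0∞)
    (hLDP_P : SatisfiesLDP (fun n => (P n).map (fun x => (M n x, action (P n) (Q n) n x))) J_P)
    (hLDP_Q : SatisfiesLDP (fun n => (Q n).map (fun x => (M n x, action (P n) (Q n) n x))) J_Q)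
    (hJ_P : LowerSemicontinuous J_P) (hJ_Q : LowerSemicontinuous J_Q) (p : E × ℝ) :
    (J_P p : EReal) = (J_Q p : EReal) + (p.2 : EReal) := by
  have hsnd : Tendsto Prod.snd (𝓝 p) (𝓝 p.2) := continuous_snd.continuousAt
  refine le_antisymm ?_ (EReal.add_le_of_le_sub ?_)
  · refine hLDP_Q.le_add_of_eventually_smallSets hLDP_P (hJ_P p) fun b hb => ?_
    filter_upwards [(hsnd.eventually_le_const hb).smallSets] with F hFb hF
    filter_upwards [eventually_ne_atTop 0] with n hn
    exact expRate_map_le_add_of_snd_le (habs n).1 (habs n).2 (hM n) hn hF hFb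
  · rw [sub_eq_add_neg, ← EReal.coe_neg]
    refine hLDP_P.le_add_of_eventually_smallSets hLDP_Q (hJ_Q p) fun b hb => ?_
    filter_upwards [(hsnd.eventually_const_le (neg_lt.1 hb)).smallSets] with F hFb hF
    filter_upwards [eventually_ne_atTop 0] with n hn
    simpa only [neg_neg] using
      expRate_map_le_neg_add_of_le_snd (habs n).1 (habs n).2 (hM n) hn hF hFb

/-- Proposition 1 (fluctuation relation): under Assumption 3, the joint rate functions of
`(M_n, W_n)` under `P_n` and `Q_n` satisfy `J_P(m,w) = J_Q(m,w) + w` on their common domain. -/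
theorem fluctuation_relation
    {D : ℕ} {Λ : ℕ → Type*} [∀ n, MeasurableSpace (Λ n)]
    (P Q : ∀ n, Measure (Λ n))
    [∀ n, IsProbabilityMeasure (P n)] [∀ n, IsProbabilityMeasure (Q n)]
    (habs : ∀ n, P n ≪ Q n ∧ Q n ≪ P n)
    (M : ∀ n, Λ n → (Fin D → ℝ)) (hM : ∀ n, Measurable (M n))
    (J_P J_Q : (Fin D → ℝ) × ℝ → ℝ≥0∞)
    (hLDP_P : SatisfiesLDP (fun n => (P n).map (fun x => (M n x, action (P n) (Q n) n x))) J_P)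
    (hLDP_Q : SatisfiesLDP (fun n => (Q n).map (fun x => (M n x, action (P n) (Q n) n x))) J_Q)
    (hJPgood : IsGoodRate J_P) (hJQgood : IsGoodRate J_Q)
    (hdom : {p | J_P p ≠ ⊤} = {p | J_Q p ≠ ⊤})
    (hne : {p | J_P p ≠ ⊤}.Nonempty)
    :
    ∀ p : (Fin D → ℝ) × ℝ, J_P p ≠ ⊤ →
      (J_P p : EReal) = (J_Q p : EReal) + (p.2 : EReal) := fun p _ =>
  fluctuation_relation_general P Q habs M hM J_P J_Q hLDP_P hLDP_Q hJPgood.1 hJQgood.1 p
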